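/- Let γ : ℝ → ℝ be locally Lipschitz, strictly increasing, surjective, with γ(0) = 0 (an extended class K∞ function). Let y : [0,∞) → ℝ be differentiable with y'(t) ≥ -γ(y(t)) for all t ≥ 0. Then min(y(t), 0) → 0 as t → ∞; in particular, if y(0) < 0 then y(t) is nondecreasing while negative and converges to the set [0,∞). -/

import Mathlib

/-!
Wherever `y = c < 0`, the differential inequality gives `y' ≥ -γ c > 0`, so `y` can never cross a
negative level downwards: `{t | c ≤ y t}` is forward invariant. Applied with `c = y s` this is
monotonicity while negative. For convergence, fix `ε > 0`. If `y` stayed below `-ε` forever, then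
`y' > -γ (-ε) > 0` throughout, so `y` would grow at least linearly, a contradiction; hence `y`
reaches the level `-ε`, and then stays above it. Both comparisons of `y` with an affine function
are instances of `affine_le_of_deriv`.
-/

open Filter

/-- A function starting above a line of slope `δ`, and having derivative greater than `δ` at each
contact with it, stays above that line. -/
lemma affine_le_of_deriv {y y' : ℝ → ℝ}
    (hderiv : ∀ t ∈ Set.Ici (0 : ℝ), HasDerivWithinAt y (y' t) (Set.Ici (0 : ℝ)) t)
    {s t c δ : ℝ} (hs : 0 ≤ s) (hst : s ≤ t) (hc : c ≤ y s)
    (hδ : ∀ x, s ≤ x → y x = c + δ * (x - s) → δ < y' x) :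
    c + δ * (t - s) ≤ y t := by
  have hB : ∀ x, HasDerivAt (fun x => -(c + δ * (x - s))) (-δ) x := fun x => by
    have h := ((((hasDerivAt_id x).sub_const s).const_mul δ).const_add c).neg
    rw [mul_one] at h
    exact h
  have key := image_le_of_deriv_right_lt_deriv_boundary' (f := fun x => -y x)
    (f' := fun x => -y' x) (a := s) (b := t) (B := fun x => -(c + δ * (x - s)))
    (B' := fun _ => -δ)
    (fun x hx => ((hderiv x (hs.trans hx.1)).continuousWithinAt.mono
      fun z hz => hs.trans hz.1).neg)
    (fun x hx => ((hderiv x (hs.trans hx.1)).mono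
      (Set.Ici_subset_Ici.2 (hs.trans hx.1))).neg)
    (by simpa using hc)
    (fun x _ => (hB x).continuousAt.continuousWithinAt)
    (fun x _ => (hB x).hasDerivWithinAt)
    (fun x hx h => neg_lt_neg (hδ x hx.1 (neg_injective h)))
    (Set.right_mem_Icc.2 hst)
  exact neg_le_neg_iff.1 key

/-- Let γ : ℝ → ℝ be locally Lipschitz, strictly increasing, surjective,
with γ(0) = 0 (an extended class K∞ function). Let y : [0,∞) → ℝ be differentiable
with y'(t) ≥ -γ(y(t)) for all t ≥ 0. Then min(y(t), 0) → 0 as t → ∞; in particular,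
if y(0) < 0 then y(t) is nondecreasing while negative (and converges to the set [0,∞)). -/
theorem statement2 (γ : ℝ → ℝ) (hγ_lip : LocallyLipschitz γ) (hγ_mono : StrictMono γ)
    (hγ_surj : Function.Surjective γ) (hγ0 : γ 0 = 0)
    (y y' : ℝ → ℝ)
    (hderiv : ∀ t ∈ Set.Ici (0 : ℝ), HasDerivWithinAt y (y' t) (Set.Ici (0 : ℝ)) t)
    (hineq : ∀ t ∈ Set.Ici (0 : ℝ), y' t ≥ -γ (y t)) :
    Tendsto (fun t => min (y t) 0) atTop (nhds 0) ∧
      (y 0 < 0 → MonotoneOn y {t : ℝ | 0 ≤ t ∧ y t < 0}) := by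
  have hneg : ∀ c < 0, 0 < -γ c := fun c hc => by
    have := hγ_mono hc
    linarith
  have barrier : ∀ s t c, 0 ≤ s → s ≤ t → c < 0 → c ≤ y s → c ≤ y t := by
    intro s t c hs hst hc hcs
    have h := affine_le_of_deriv hderiv (δ := 0) hs hst hcs fun x hx hyx => by
      have h1 := hineq x (hs.trans hx)
      have h2 := hneg c hc
      rw [hyx, zero_mul, add_zero] at h1
      linarith
    simpa using h
  refine ⟨?_, fun _ s hs t ht hst => barrier s t (y s) hs.1 hst hs.2 le_rfl⟩
  rw [Metric.tendsto_atTop]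
  intro ε hε
  -- The level `-(ε / 2)` rather than `-ε` gives the strict inequality in the limit.
  have hc : -(ε / 2) < 0 := by linarith
  obtain ⟨s, hs, hys⟩ : ∃ s, 0 ≤ s ∧ -(ε / 2) ≤ y s := by
    by_contra! hlt
    set δ := -γ (-(ε / 2)) with hδdef
    have hδ : 0 < δ := hneg _ hc
    -- At this time the line of slope `δ` through `(0, y 0)` has reached height `0`.
    have hT : 0 ≤ -y 0 / δ := div_nonneg (by linarith [hlt 0 le_rfl]) hδ.le
    have h := affine_le_of_deriv hderiv (δ := δ) le_rfl hT le_rfl fun x hx _ => by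
      have h1 := hineq x hx
      have h2 := hγ_mono (hlt x hx)
      linarith
    rw [sub_zero, mul_div_cancel₀ _ hδ.ne'] at h
    linarith [hlt _ hT]
  refine ⟨s, fun t ht => ?_⟩
  have h := barrier s t _ hs ht hc hys
  rw [Real.dist_eq, sub_zero, abs_lt]
  exact ⟨lt_min (by linarith) (by linarith), (min_le_right _ _).trans_lt hε⟩
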